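/- Let u : ℝ^5 → ℝ be a positive C² solution of Δu = 15·u^{7/3} on all of ℝ^5 (geometer's sign convention: −∑∂²u/∂x_i² = −15u^{7/3} fails; i.e. ∑∂²u/∂x_i² = −15 u^{7/3}), with u(0) = 1 and u ≤ 1 everywhere. Then u(y) = (1 + |y|²)^{−3/2} for all y. -/

import Mathlib

open Real
open Filter InnerProductSpace Laplacian Metric Module Set Topology
open EuclideanGeometry (inversion)

/-!
The proof is by moving spheres. Both the equation and its positive solutions are preserved by the
Kelvin transform in any sphere. About each centre, small spheres satisfy `kelvin c R u ≤ u` outside,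
and by the strong minimum principle and Hopf's lemma `R` can be increased until equality holds. If
equality never occurred about one centre, it would occur about none, and a function dominating all
its Kelvin transforms is constant, which the equation forbids. Hence `u` equals a Kelvin transform
of itself about every centre. Comparing the resulting first-order expansions at infinity gives
`∇u = -(n - 2) b u ^ (n / (n - 2)) (y - x₀)`, so `u ^ (-2 / (n - 2))` is a quadratic polynomial, and
the equation at `x₀` fixes its constant term.
-/

section SecondOrderCalculus

variable {E F : Type*} [NormedAddCommGroup E] [NormedAddCommGroup F]

section NormedSpace

variable [NormedSpace ℝ E] [NormedSpace ℝ F]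

theorem hasFDerivAt_fderiv_of_contDiffAt_two {f : E → F} {x : E} (hf : ContDiffAt ℝ 2 f x) :
    HasFDerivAt (fderiv ℝ f) (fderiv ℝ (fderiv ℝ f) x) x :=
  ((hf.fderiv_right (m := 1) (by norm_num)).differentiableAt one_ne_zero).hasFDerivAt

theorem eventually_differentiableAt_of_contDiffAt_two {f : E → F} {x : E}
    (hf : ContDiffAt ℝ 2 f x) : ∀ᶠ y in 𝓝 x, DifferentiableAt ℝ f y :=
  (hf.eventually (by simp)).mono fun _ hy ↦ hy.differentiableAt two_ne_zero

theorem fderiv_fderiv_apply_self_nonneg_of_isLocalMin {f : E → ℝ} {x : E}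
    (hf : ContDiffAt ℝ 2 f x) (hmin : IsLocalMin f x) (v : E) :
    0 ≤ fderiv ℝ (fderiv ℝ f) x v v := by
  set line : ℝ → E := fun t ↦ x + t • v
  have hline (t : ℝ) : HasDerivAt line v t := by
    simpa only [id, one_smul] using ((hasDerivAt_id t).smul_const v).const_add x
  have hline0 : line 0 = x := by simp [line]
  have hlim : Tendsto line (𝓝 0) (𝓝 x) := hline0 ▸ (hline 0).continuousAt
  have hderiv : deriv (f ∘ line) =ᶠ[𝓝 0] fun t ↦ fderiv ℝ f (line t) v := by
    filter_upwards [hlim.eventually (eventually_differentiableAt_of_contDiffAt_two hf)] with t ht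
    exact (ht.hasFDerivAt.comp_hasDerivAt t (hline t)).deriv
  have hderiv2 : deriv (deriv (f ∘ line)) 0 = fderiv ℝ (fderiv ℝ f) x v v := by
    have h := hasFDerivAt_fderiv_of_contDiffAt_two hf
    rw [← hline0] at h
    rw [hderiv.deriv_eq, ← hline0]
    simpa using ((h.comp_hasDerivAt 0 (hline 0)).clm_apply (hasDerivAt_const 0 v)).deriv
  have hmin' : IsLocalMin (f ∘ line) 0 := by
    filter_upwards [hlim.eventually hmin] with t ht
    simpa [hline0] using ht
  have hcont : ContinuousAt (f ∘ line) 0 :=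
    ContinuousAt.comp (hline0.symm ▸ hf.continuousAt) (hline 0).continuousAt
  by_contra! hneg
  -- A negative second derivative would make `0` also a local maximum: `f ∘ line` is then constant.
  have hmax : IsLocalMax (f ∘ line) 0 :=
    isLocalMax_of_deriv_deriv_neg (hderiv2 ▸ hneg) hmin'.deriv_eq_zero hcont
  have hconst : f ∘ line =ᶠ[𝓝 0] fun _ ↦ f (line 0) := by
    filter_upwards [hmin', hmax] with t h₁ h₂ using le_antisymm h₂ h₁
  have : deriv (deriv (f ∘ line)) 0 = 0 := by
    rw [hconst.deriv.deriv_eq]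
    simp
  exact hneg.ne (hderiv2 ▸ this)

theorem fderiv_fderiv_smul_apply_self {f : E → ℝ} {g : E → F} {x : E} (hf : ContDiffAt ℝ 2 f x)
    (hg : ContDiffAt ℝ 2 g x) (v : E) :
    fderiv ℝ (fderiv ℝ fun y ↦ f y • g y) x v v =
      f x • fderiv ℝ (fderiv ℝ g) x v v + (2 : ℝ) • fderiv ℝ f x v • fderiv ℝ g x v +
        fderiv ℝ (fderiv ℝ f) x v v • g x := by
  have hfd := (hf.differentiableAt two_ne_zero).hasFDerivAt
  have hgd := (hg.differentiableAt two_ne_zero).hasFDerivAt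
  have hf2 := (hasFDerivAt_fderiv_of_contDiffAt_two hf).clm_apply (hasFDerivAt_const v x)
  have hg2 := (hasFDerivAt_fderiv_of_contDiffAt_two hg).clm_apply (hasFDerivAt_const v x)
  have hfirst : (fun y ↦ fderiv ℝ (fun z ↦ f z • g z) y v) =ᶠ[𝓝 x]
      fun y ↦ f y • fderiv ℝ g y v + fderiv ℝ f y v • g y := by
    filter_upwards [eventually_differentiableAt_of_contDiffAt_two hf,
      eventually_differentiableAt_of_contDiffAt_two hg] with y hfy hgy
    simp [fderiv_fun_smul hfy hgy]
  have hfg : ContDiffAt ℝ 2 (fun y ↦ f y • g y) x := hf.smul hg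
  have happly := (hasFDerivAt_fderiv_of_contDiffAt_two hfg).clm_apply (hasFDerivAt_const v x)
  have heq := (happly.congr_of_eventuallyEq hfirst.symm).unique ((hfd.smul hg2).add (hf2.smul hgd))
  calc fderiv ℝ (fderiv ℝ fun y ↦ f y • g y) x v v
    _ = f x • fderiv ℝ (fderiv ℝ g) x v v + fderiv ℝ f x v • fderiv ℝ g x v +
          (fderiv ℝ f x v • fderiv ℝ g x v + fderiv ℝ (fderiv ℝ f) x v v • g x) := by
      simpa using DFunLike.congr_fun heq v
    _ = _ := by module

theorem fderiv_fderiv_comp_apply_self {φ : E → E} {f : E → F} {x : E}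
    (hf : ContDiffAt ℝ 2 f (φ x)) (hφ : ContDiffAt ℝ 2 φ x) (v : E) :
    fderiv ℝ (fderiv ℝ (f ∘ φ)) x v v =
      fderiv ℝ (fderiv ℝ f) (φ x) (fderiv ℝ φ x v) (fderiv ℝ φ x v) +
        fderiv ℝ f (φ x) (fderiv ℝ (fderiv ℝ φ) x v v) := by
  have hφd := (hφ.differentiableAt two_ne_zero).hasFDerivAt
  have hφ2 := (hasFDerivAt_fderiv_of_contDiffAt_two hφ).clm_apply (hasFDerivAt_const v x)
  have hfφ := (hasFDerivAt_fderiv_of_contDiffAt_two hf).comp x hφd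
  have hfirst : (fun y ↦ fderiv ℝ (f ∘ φ) y v) =ᶠ[𝓝 x]
      fun y ↦ fderiv ℝ f (φ y) (fderiv ℝ φ y v) := by
    filter_upwards [eventually_differentiableAt_of_contDiffAt_two hφ,
      hφ.continuousAt.eventually (eventually_differentiableAt_of_contDiffAt_two hf)] with y hy hfy
    simp [fderiv_comp y hfy hy]
  have happly := (hasFDerivAt_fderiv_of_contDiffAt_two (hf.comp x hφ)).clm_apply
    (hasFDerivAt_const v x)
  have heq := (happly.congr_of_eventuallyEq hfirst.symm).unique (hfφ.clm_apply hφ2)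
  simpa [add_comm] using DFunLike.congr_fun heq v

end NormedSpace

variable [InnerProductSpace ℝ E] [FiniteDimensional ℝ E] [NormedSpace ℝ F]

theorem laplacian_eq_sum_fderiv_fderiv {ι : Type*} [Fintype ι] (b : OrthonormalBasis ι ℝ E)
    (f : E → F) (x : E) : Δ f x = ∑ i, fderiv ℝ (fderiv ℝ f) x (b i) (b i) := by
  simp [laplacian_eq_iteratedFDeriv_orthonormalBasis f b, iteratedFDeriv_two_apply]

theorem laplacian_nonneg_of_isLocalMin {f : E → ℝ} {x : E} (hf : ContDiffAt ℝ 2 f x)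
    (hmin : IsLocalMin f x) : 0 ≤ Δ f x := by
  rw [laplacian_eq_sum_fderiv_fderiv (stdOrthonormalBasis ℝ E)]
  exact Finset.sum_nonneg fun i _ ↦ fderiv_fderiv_apply_self_nonneg_of_isLocalMin hf hmin _

theorem laplacian_fun_smul {f : E → ℝ} {g : E → F} {x grad : E} (hf : ContDiffAt ℝ 2 f x)
    (hgrad : HasGradientAt f grad x) (hg : ContDiffAt ℝ 2 g x) :
    Δ (fun y ↦ f y • g y) x = f x • Δ g x + (2 : ℝ) • fderiv ℝ g x grad + Δ f x • g x := by
  set b := stdOrthonormalBasis ℝ E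
  have hcross : fderiv ℝ g x grad = ∑ i, fderiv ℝ f x (b i) • fderiv ℝ g x (b i) := by
    conv_lhs => rw [← b.sum_repr' grad]
    simp [hgrad.hasFDerivAt.fderiv, real_inner_comm]
  simp only [laplacian_eq_sum_fderiv_fderiv b, fderiv_fderiv_smul_apply_self hf hg, hcross,
    Finset.sum_add_distrib, Finset.smul_sum, Finset.sum_smul]

theorem laplacian_comp_of_conformal {f : E → F} {φ : E → E} {x : E} {a : ℝ} {A : E ≃ₗᵢ[ℝ] E}
    (hf : ContDiffAt ℝ 2 f (φ x)) (hφ : ContDiffAt ℝ 2 φ x)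
    (hφ' : HasFDerivAt φ (a • (A : E →L[ℝ] E)) x) :
    Δ (f ∘ φ) x = a ^ 2 • Δ f (φ x) + fderiv ℝ f (φ x) (Δ φ x) := by
  set b := stdOrthonormalBasis ℝ E
  rw [laplacian_eq_sum_fderiv_fderiv b (f ∘ φ), laplacian_eq_sum_fderiv_fderiv (b.map A) f,
    laplacian_eq_sum_fderiv_fderiv b φ]
  simp [fderiv_fderiv_comp_apply_self hf hφ, hφ'.fderiv, Finset.sum_add_distrib, Finset.smul_sum,
    smul_smul, sq]

end SecondOrderCalculus

section Explicit

variable {E : Type*} [NormedAddCommGroup E] [InnerProductSpace ℝ E] {c x : E}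

theorem hasGradientAt_dist_rpow [CompleteSpace E] (hx : x ≠ c) (s : ℝ) :
    HasGradientAt (fun y ↦ dist y c ^ s) ((s * dist x c ^ (s - 2)) • (x - c)) x := by
  have hsq : HasFDerivAt (fun y ↦ ‖y - c‖ ^ 2) (2 • innerSL ℝ (x - c)) x :=
    ((hasFDerivAt_id x).sub_const c).norm_sq
  have hpow := hsq.rpow_const (p := s / 2) (Or.inl (by simpa [sub_eq_zero] using hx))
  have hfun : (fun y ↦ dist y c ^ s) = fun y ↦ (‖y - c‖ ^ 2) ^ (s / 2) := by
    funext y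
    rw [dist_eq_norm, ← rpow_natCast_mul (norm_nonneg _)]
    ring_nf
  have hcoeff : (‖x - c‖ ^ 2) ^ (s / 2 - 1) = dist x c ^ (s - 2) := by
    rw [dist_eq_norm, ← rpow_natCast_mul (norm_nonneg _)]
    ring_nf
  rw [hasGradientAt_iff_hasFDerivAt, hfun]
  refine hpow.congr_fderiv (ContinuousLinearMap.ext fun v ↦ ?_)
  simp only [hcoeff, toDual_apply_apply, inner_smul_left, smul_apply,
    innerSL_apply_apply, smul_eq_mul, nsmul_eq_mul, conj_trivial]
  push_cast
  ring

theorem contDiffAt_dist_rpow {k : WithTop ℕ∞} (hx : x ≠ c) (s : ℝ) :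
    ContDiffAt ℝ k (fun y ↦ dist y c ^ s) x :=
  (contDiffAt_id.dist ℝ contDiffAt_const hx).rpow_const_of_ne (dist_ne_zero.2 hx)

variable [FiniteDimensional ℝ E]

theorem laplacian_eq_trace_of_eventually_hasGradientAt {f : E → ℝ} {grad : E → E} {T : E →L[ℝ] E}
    (hgrad : ∀ᶠ y in 𝓝 x, HasGradientAt f (grad y) y) (hT : HasFDerivAt grad T x) :
    Δ f x = LinearMap.trace ℝ E T := by
  have hfderiv : fderiv ℝ f =ᶠ[𝓝 x] fun y ↦ innerSL ℝ (grad y) := by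
    filter_upwards [hgrad] with y hy
    exact hy.hasFDerivAt.fderiv
  have hfderiv2 : fderiv ℝ (fun y ↦ innerSL ℝ (grad y)) x = (innerSL ℝ (E := E)).comp T :=
    ((innerSL ℝ (E := E)).hasFDerivAt.comp x hT).fderiv
  rw [laplacian_eq_sum_fderiv_fderiv (stdOrthonormalBasis ℝ E), hfderiv.fderiv_eq,
    LinearMap.trace_eq_sum_inner _ (stdOrthonormalBasis ℝ E)]
  simp [hfderiv2, real_inner_comm]

theorem laplacian_dist_rpow (hx : x ≠ c) (s : ℝ) :
    Δ (fun y ↦ dist y c ^ s) x = s * (s + finrank ℝ E - 2) * dist x c ^ (s - 2) := by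
  have hgrad : ∀ᶠ y in 𝓝 x,
      HasGradientAt (fun y ↦ dist y c ^ s) ((s * dist y c ^ (s - 2)) • (y - c)) y :=
    (eventually_ne_nhds hx).mono fun y hy ↦ hasGradientAt_dist_rpow hy s
  have hcoeff := (hasGradientAt_dist_rpow hx (s - 2)).hasFDerivAt.const_mul s
  rw [laplacian_eq_trace_of_eventually_hasGradientAt hgrad
    (hcoeff.fun_smul ((hasFDerivAt_id x).sub_const c))]
  have hpow : dist x c ^ (s - 2 - 2) * ‖x - c‖ ^ 2 = dist x c ^ (s - 2) := by
    rw [← dist_eq_norm, ← rpow_natCast, ← rpow_add (dist_pos.2 hx)]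
    norm_num
  simp only [map_smul, map_add, ContinuousLinearMap.toLinearMap_add,
    ContinuousLinearMap.toLinearMap_smul, ContinuousLinearMap.coe_id,
    ContinuousLinearMap.coe_smulRight, ContinuousLinearMap.coe_coe, LinearMap.trace_id,
    LinearMap.trace_smulRight, LinearMap.smul_apply, toDual_apply_apply, smul_eq_mul,
    real_inner_self_eq_norm_sq]
  linear_combination s * (s - 2) * hpow

theorem laplacian_norm_sq_sub (c x : E) : Δ (fun y ↦ ‖y - c‖ ^ 2) x = 2 * finrank ℝ E := by
  have hgrad (y : E) : HasGradientAt (fun y ↦ ‖y - c‖ ^ 2) ((2 : ℝ) • (y - c)) y := by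
    rw [hasGradientAt_iff_hasFDerivAt]
    simpa [two_smul, two_nsmul] using! ((hasFDerivAt_id y).sub_const c).norm_sq
  rw [laplacian_eq_trace_of_eventually_hasGradientAt (.of_forall hgrad)
    (((hasFDerivAt_id x).sub_const c).const_smul (2 : ℝ))]
  simp

theorem laplacian_inversion (hx : x ≠ c) (R : ℝ) :
    Δ (inversion c R) x =
      (-2 * (finrank ℝ E - 2) * R ^ 2 * dist x c ^ (-4 : ℝ)) • (x - c) := by
  set g : E → E := fun y ↦ dist y c ^ (-2 : ℝ) • (y - c)
  have hinv : inversion c R = R ^ 2 • g + fun _ ↦ c := by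
    funext y
    simp [g, EuclideanGeometry.inversion, rpow_neg dist_nonneg, div_eq_mul_inv, mul_pow, mul_smul]
  have hsub : ContDiffAt ℝ 2 (fun y ↦ y - c) x := contDiffAt_id.sub contDiffAt_const
  have hderiv (y : E) : fderiv ℝ (fun y ↦ y - c) y = .id ℝ E :=
    ((hasFDerivAt_id y).sub_const c).fderiv
  have hlap : Δ (fun y : E ↦ y - c) x = 0 := by
    simp [laplacian_eq_sum_fderiv_fderiv (stdOrthonormalBasis ℝ E), funext hderiv]
  have hg : ContDiffAt ℝ 2 g x := (contDiffAt_dist_rpow hx _).smul hsub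
  rw [hinv, ContDiffAt.laplacian_add (f₁ := R ^ 2 • g) (hg.const_smul _) contDiffAt_const,
    laplacian_smul _ hg,
    laplacian_fun_smul (contDiffAt_dist_rpow hx _) (hasGradientAt_dist_rpow hx _) hsub,
    laplacian_dist_rpow hx, hlap, hderiv]
  norm_num [smul_smul]
  module

/-- The Kelvin transform of `u` with respect to the sphere of centre `c` and radius `R`: the
conformally weighted composition of `u` with the inversion in that sphere. -/
noncomputable def kelvin (c : E) (R : ℝ) (u : E → ℝ) (x : E) : ℝ :=
  (R / dist x c) ^ (finrank ℝ E - 2 : ℝ) * u (inversion c R x)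

theorem laplacian_kelvin {u : E → ℝ} {R : ℝ} (hR : 0 < R) (hx : x ≠ c)
    (hu : ContDiffAt ℝ 2 u (inversion c R x)) :
    Δ (kelvin c R u) x = (R / dist x c) ^ (finrank ℝ E + 2 : ℝ) * Δ u (inversion c R x) := by
  set n : ℝ := (finrank ℝ E : ℝ) with hn
  have hd : 0 < dist x c := dist_pos.2 hx
  have hinv : ContDiffAt ℝ 2 (inversion c R) x := contDiffAt_const.inversion contDiffAt_const
    contDiffAt_id hx
  have hcomp : ContDiffAt ℝ 2 (u ∘ inversion c R) x := hu.comp x hinv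
  have hinv' := EuclideanGeometry.hasFDerivAt_inversion (R := R) hx
  have hcomp' := ((hu.differentiableAt two_ne_zero).hasFDerivAt.comp x hinv').fderiv
  set w : E → ℝ := fun y ↦ dist y c ^ (2 - n) • (u ∘ inversion c R) y
  have hw : ContDiffAt ℝ 2 w x := (contDiffAt_dist_rpow hx _).smul hcomp
  have hkelvin : kelvin c R u = R ^ (n - 2) • w := by
    funext y
    simp only [kelvin, div_rpow hR.le dist_nonneg, ← hn, Pi.smul_apply, smul_eq_mul,
      Function.comp_apply, w]
    rw [← neg_sub n 2, rpow_neg dist_nonneg]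
    ring
  have hpow : dist x c ^ (2 - n - 2) = dist x c ^ (2 - n) * (dist x c ^ 2)⁻¹ := by
    rw [rpow_sub hd, rpow_two, div_eq_mul_inv]
  have hpow4 : dist x c ^ (-4 : ℝ) = (dist x c ^ 4)⁻¹ := by
    rw [rpow_neg hd.le, rpow_ofNat]
  have hweight : (R / dist x c) ^ (n + 2) =
      R ^ (n - 2) * dist x c ^ (2 - n) * (R / dist x c) ^ 4 := by
    rw [← neg_sub n 2, rpow_neg hd.le, ← div_eq_mul_inv, ← div_rpow hR.le hd.le,
      ← rpow_add_natCast (div_pos hR hd).ne']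
    norm_num
    ring_nf
  rw [hkelvin, laplacian_smul _ hw,
    laplacian_fun_smul (contDiffAt_dist_rpow hx _) (hasGradientAt_dist_rpow hx _) hcomp,
    laplacian_dist_rpow hx, laplacian_comp_of_conformal hu hinv hinv', laplacian_inversion hx,
    hcomp', hweight, hpow, hpow4]
  -- Inversion flips the radial direction `x - c`, so the two first-order terms cancel.
  simp only [smul_eq_mul, neg_mul, neg_smul, map_neg, map_smul, smul_apply, ringHom_apply,
    ContinuousLinearMap.comp_smulₛₗ, ContinuousLinearMap.comp_apply, ContinuousLinearEquiv.coe_coe,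
    LinearIsometryEquiv.coe_toContinuousLinearEquiv, Function.comp_apply,
    Submodule.reflection_orthogonalComplement_singleton_eq_neg]
  ring

end Explicit

theorem isPreconnected_compl_closedBall {E : Type*} [NormedAddCommGroup E] [NormedSpace ℝ E]
    (hdim : 1 < finrank ℝ E) (c : E) {R : ℝ} (hR : 0 ≤ R) :
    IsPreconnected (closedBall c R)ᶜ := by
  have himage : (closedBall c R)ᶜ =
      (fun p : ℝ × E ↦ c + p.1 • p.2) '' (Ioi R ×ˢ sphere (0 : E) 1) := by
    ext y
    simp only [mem_compl_iff, mem_closedBall, not_le, mem_image, mem_prod, mem_Ioi, Prod.exists]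
    constructor
    · intro hy
      have hpos : 0 < dist y c := hR.trans_lt hy
      refine ⟨dist y c, (dist y c)⁻¹ • (y - c), ⟨hy, ?_⟩, ?_⟩
      · simp [norm_smul, ← dist_eq_norm, hpos.ne']
      · simp [smul_smul, hpos.ne']
    · rintro ⟨t, v, ⟨ht, hv⟩, rfl⟩
      have hv' : ‖v‖ = 1 := by simpa using hv
      simpa [norm_smul, hv', abs_of_pos (hR.trans_lt ht)] using ht
  rw [himage]
  exact (isPreconnected_Ioi.prod (isPreconnected_sphere
    (one_lt_rank_of_one_lt_finrank hdim) 0 1)).image _ (by fun_prop)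

section Superharmonic

variable {E : Type*} [NormedAddCommGroup E] [InnerProductSpace ℝ E] [FiniteDimensional ℝ E]
  {f h w : E → ℝ} {s t : Set E} {c : E} {a b r R m : ℝ}

/-- A `C²` function is superharmonic on `s` if its Laplacian is nonpositive there. -/
structure SuperharmonicOn (f : E → ℝ) (s : Set E) : Prop where
  contDiffAt : ∀ x ∈ s, ContDiffAt ℝ 2 f x
  laplacian_nonpos : ∀ x ∈ s, Δ f x ≤ 0

namespace SuperharmonicOn

theorem mono (hf : SuperharmonicOn f s) (hts : t ⊆ s) : SuperharmonicOn f t :=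
  ⟨fun x hx ↦ hf.contDiffAt x (hts hx), fun x hx ↦ hf.laplacian_nonpos x (hts hx)⟩

theorem continuousOn (hf : SuperharmonicOn f s) : ContinuousOn f s :=
  fun x hx ↦ (hf.contDiffAt x hx).continuousAt.continuousWithinAt

theorem sub_harmonic (hf : SuperharmonicOn f s) (hh : HarmonicOnNhd h s) :
    SuperharmonicOn (f - h) s where
  contDiffAt x hx := (hf.contDiffAt x hx).sub (hh x hx).1
  laplacian_nonpos x hx := by
    have hzero : Δ h x = 0 := (hh x hx).2.self_of_nhds
    simpa [ContDiffAt.laplacian_sub (hf.contDiffAt x hx) (hh x hx).1, hzero]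
      using hf.laplacian_nonpos x hx

theorem not_isLocalMin_sub_norm_sq [Nontrivial E] (hf : SuperharmonicOn f s) {x : E} (hx : x ∈ s)
    {ε : ℝ} (hε : 0 < ε) : ¬ IsLocalMin (f - ε • fun y ↦ ‖y - c‖ ^ 2) x := by
  intro hmin
  have hsq : ContDiffAt ℝ 2 (fun y ↦ ‖y - c‖ ^ 2) x :=
    (contDiffAt_id.sub contDiffAt_const).norm_sq ℝ
  have hεsq : ContDiffAt ℝ 2 (ε • fun y ↦ ‖y - c‖ ^ 2) x := hsq.const_smul ε
  have hlap : 0 ≤ Δ (f - ε • fun y ↦ ‖y - c‖ ^ 2) x :=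
    laplacian_nonneg_of_isLocalMin ((hf.contDiffAt x hx).sub hεsq) hmin
  rw [ContDiffAt.laplacian_sub (hf.contDiffAt x hx) hεsq, laplacian_smul ε hsq,
    laplacian_norm_sq_sub, smul_eq_mul] at hlap
  have hdim : (0 : ℝ) < finrank ℝ E := mod_cast finrank_pos
  have : 0 < ε * (2 * finrank ℝ E) := by positivity
  linarith [hf.laplacian_nonpos x hx]

theorem nonneg_of_isCompact [Nontrivial E] {K U : Set E} (hf : SuperharmonicOn f U)
    (hK : IsCompact K) (hU : IsOpen U) (hUK : U ⊆ K) (hcont : ContinuousOn f K)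
    (hnonneg : ∀ x ∈ K \ U, 0 ≤ f x) {x : E} (hx : x ∈ K) : 0 ≤ f x := by
  obtain ⟨C, hC⟩ := (hK.image_of_continuousOn (f := fun y ↦ ‖y‖ ^ 2) (by fun_prop)).bddAbove
  have hbound (ε : ℝ) (hε : 0 < ε) : 0 ≤ f x + ε * C := by
    obtain ⟨z, hz, hmin⟩ := hK.exists_isMinOn ⟨x, hx⟩
      (f := f - ε • fun y ↦ ‖y - 0‖ ^ 2) (hcont.sub (by fun_prop))
    have hzU : z ∉ U := fun hzU ↦ hf.not_isLocalMin_sub_norm_sq hzU hε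
      (hmin.isLocalMin (mem_of_superset (hU.mem_nhds hzU) hUK))
    have hzx := hmin hx
    have hzC : ‖z‖ ^ 2 ≤ C := hC ⟨z, hz, rfl⟩
    simp only [mem_ofPred_eq, Pi.sub_apply, Pi.smul_apply, sub_zero, smul_eq_mul] at hzx
    nlinarith [hnonneg z ⟨hz, hzU⟩, sq_nonneg ‖x‖]
  have hlim : Tendsto (fun ε ↦ f x + ε * C) (𝓝[>] 0) (𝓝 (f x + 0 * C)) :=
    Tendsto.mono_left (Continuous.tendsto (by fun_prop) 0) nhdsWithin_le_nhds
  simpa using ge_of_tendsto hlim (eventually_mem_nhdsWithin.mono hbound)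

end SuperharmonicOn

theorem harmonicOnNhd_dist_rpow (c : E) (α β : ℝ) :
    HarmonicOnNhd (fun y ↦ α * dist y c ^ (2 - finrank ℝ E : ℝ) + β) {c}ᶜ := by
  have hrpow : HarmonicOnNhd (fun y ↦ dist y c ^ (2 - finrank ℝ E : ℝ)) {c}ᶜ := fun x hx ↦ by
    refine ⟨contDiffAt_dist_rpow hx _, (eventually_ne_nhds hx).mono fun y hy ↦ ?_⟩
    simp [laplacian_dist_rpow hy]
  exact fun x hx ↦ ((hrpow x hx).const_smul (c := α)).add (harmonicAt_const β)

namespace SuperharmonicOn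

theorem le_of_annulus [Nontrivial E] {α β : ℝ} (ha : 0 < a)
    (hw : SuperharmonicOn w {y | dist y c ∈ Ioo a b})
    (hcont : ContinuousOn w {y | dist y c ∈ Icc a b})
    (hinner : ∀ y, dist y c = a → α * a ^ (2 - finrank ℝ E : ℝ) + β ≤ w y)
    (houter : ∀ y, dist y c = b → α * b ^ (2 - finrank ℝ E : ℝ) + β ≤ w y) {x : E}
    (hx : dist x c ∈ Icc a b) : α * dist x c ^ (2 - finrank ℝ E : ℝ) + β ≤ w x := by
  have hdist : Continuous fun y ↦ dist y c := by fun_prop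
  have hK : IsCompact {y | dist y c ∈ Icc a b} :=
    (isCompact_closedBall c b).of_isClosed_subset (isClosed_Icc.preimage hdist) fun y hy ↦ hy.2
  have hsub : {y | dist y c ∈ Icc a b} ⊆ {c}ᶜ :=
    fun y hy ↦ dist_pos.1 (ha.trans_le hy.1)
  have hsuper := hw.sub_harmonic ((harmonicOnNhd_dist_rpow c α β).mono fun y hy ↦
    hsub (Ioo_subset_Icc_self hy))
  refine sub_nonneg.1 (hsuper.nonneg_of_isCompact hK (isOpen_Ioo.preimage hdist)
    (fun y hy ↦ Ioo_subset_Icc_self hy) (hcont.sub ?_) ?_ hx)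
  · exact fun y hy ↦ (harmonicOnNhd_dist_rpow c α β y (hsub hy)).1.continuousAt.continuousWithinAt
  · rintro y ⟨hy, hy'⟩
    rcases eq_endpoints_or_mem_Ioo_of_mem_Icc hy with h | h | h
    · simpa [h] using hinner y h
    · simpa [h] using houter y h
    · exact absurd h hy'

theorem mul_sub_rpow_le_of_annulus [Nontrivial E] (ha : 0 < a) (hm : 0 ≤ m)
    (hw : SuperharmonicOn w {y | dist y c ∈ Ioo a b})
    (hcont : ContinuousOn w {y | dist y c ∈ Icc a b}) (hinner : ∀ y, dist y c = a → m ≤ w y)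
    (houter : ∀ y, dist y c = b → 0 ≤ w y) {x : E} (hx : dist x c ∈ Icc a b) :
    m * a ^ (finrank ℝ E - 2 : ℝ) *
      (dist x c ^ (2 - finrank ℝ E : ℝ) - b ^ (2 - finrank ℝ E : ℝ)) ≤ w x := by
  set n : ℝ := (finrank ℝ E : ℝ)
  have hb : 0 < b := ha.trans_le (hx.1.trans hx.2)
  have hcancel : a ^ (n - 2) * a ^ (2 - n) = 1 := by
    rw [← rpow_add ha]
    simp
  have hβ : 0 ≤ m * a ^ (n - 2) * b ^ (2 - n) := by positivity
  have := hw.le_of_annulus (α := m * a ^ (n - 2)) (β := -(m * a ^ (n - 2) * b ^ (2 - n))) ha hcont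
    (fun y hy ↦ by rw [mul_assoc, hcancel]; linarith [hinner y hy])
    (fun y hy ↦ by linarith [houter y hy]) hx
  linarith

theorem mul_rpow_le_of_exterior (hdim : 2 < finrank ℝ E) (hr : 0 < r) (hm : 0 ≤ m)
    (hw : SuperharmonicOn w (closedBall c r)ᶜ) (hcont : ContinuousOn w (ball c r)ᶜ)
    (hnonneg : ∀ y ∉ ball c r, 0 ≤ w y) (hsphere : ∀ y ∈ sphere c r, m ≤ w y) {x : E}
    (hx : x ∉ ball c r) : m * (r / dist x c) ^ (finrank ℝ E - 2 : ℝ) ≤ w x := by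
  have : Nontrivial E := nontrivial_of_finrank_pos (by omega : 0 < finrank ℝ E)
  have hn : (0 : ℝ) < finrank ℝ E - 2 := sub_pos.2 (mod_cast hdim)
  have hrx : r ≤ dist x c := by simpa using hx
  have hbound : ∀ᶠ ρ in atTop, m * r ^ (finrank ℝ E - 2 : ℝ) *
      (dist x c ^ (2 - finrank ℝ E : ℝ) - ρ ^ (-(finrank ℝ E - 2) : ℝ)) ≤ w x := by
    filter_upwards [eventually_ge_atTop (dist x c)] with ρ hρ
    rw [neg_sub]
    refine mul_sub_rpow_le_of_annulus hr hm (hw.mono fun y hy ↦ ?_) (hcont.mono fun y hy ↦ ?_)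
      hsphere (fun y hy ↦ hnonneg y ?_) ⟨hrx, hρ⟩
    · simpa using hy.1
    · simpa using hy.1
    · simpa [hy] using hrx.trans hρ
  have hlim := ((tendsto_rpow_neg_atTop hn).const_sub
    (dist x c ^ (2 - finrank ℝ E : ℝ))).const_mul (m * r ^ (finrank ℝ E - 2 : ℝ))
  refine (le_of_eq ?_).trans (le_of_tendsto hlim hbound)
  rw [div_rpow hr.le dist_nonneg, ← neg_sub (2 : ℝ) (finrank ℝ E), rpow_neg dist_nonneg]
  simp [mul_assoc]

theorem pos_of_ball (hdim : 2 < finrank ℝ E) (hw : SuperharmonicOn w (ball c R))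
    (hnonneg : ∀ y ∈ ball c R, 0 ≤ w y) (hc : 0 < w c) {x : E} (hx : x ∈ ball c R) :
    0 < w x := by
  have : Nontrivial E := nontrivial_of_finrank_pos (by omega : 0 < finrank ℝ E)
  have hn : (2 - finrank ℝ E : ℝ) < 0 := sub_neg.2 (mod_cast hdim)
  have hcontAt : ContinuousAt w c :=
    (hw.contDiffAt c (mem_ball_self (pos_of_mem_ball hx))).continuousAt
  obtain ⟨a, ha, hnear⟩ := nhds_basis_closedBall.eventually_iff.1
    (hcontAt.eventually (lt_mem_nhds (half_lt_self hc)))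
  rcases le_or_gt (dist x c) a with hxa | hxa
  · exact (half_pos hc).trans (hnear hxa)
  obtain ⟨b, hxb, hbR⟩ := exists_between (mem_ball.1 hx)
  have hball {y : E} (hy : dist y c ∈ Icc a b) : y ∈ ball c R := hy.2.trans_lt hbR
  have hbarrier := mul_sub_rpow_le_of_annulus ha (half_pos hc).le
    (hw.mono fun y hy ↦ hball (Ioo_subset_Icc_self hy)) (hw.continuousOn.mono fun y ↦ hball)
    (fun y hy ↦ (hnear hy.le).le)
    (fun y hy ↦ hnonneg y (hball ⟨hy ▸ (hxa.trans hxb).le, hy.le⟩)) ⟨hxa.le, hxb.le⟩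
  have hgap : b ^ (2 - finrank ℝ E : ℝ) < dist x c ^ (2 - finrank ℝ E : ℝ) :=
    rpow_lt_rpow_of_neg (ha.trans hxa) hxb hn
  exact lt_of_lt_of_le (mul_pos (by positivity) (sub_pos.2 hgap)) hbarrier

theorem eq_zero_or_pos (hdim : 2 < finrank ℝ E) {U : Set E} (hU : IsOpen U)
    (hconn : IsPreconnected U) (hw : SuperharmonicOn w U) (hnonneg : ∀ y ∈ U, 0 ≤ w y) :
    (∀ y ∈ U, w y = 0) ∨ ∀ y ∈ U, 0 < w y := by
  have hpos_open : IsOpen (U ∩ w ⁻¹' Ioi 0) := hw.continuousOn.isOpen_inter_preimage hU isOpen_Ioi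
  have hzero_open : IsOpen (U ∩ w ⁻¹' {0}) := by
    refine isOpen_iff_eventually.2 fun x ⟨hxU, hx0⟩ ↦ ?_
    obtain ⟨ε, hε, hball⟩ := Metric.isOpen_iff.1 hU x hxU
    filter_upwards [ball_mem_nhds x (half_pos hε)] with y hy
    have hyU : ball y (ε / 2) ⊆ U := (ball_subset_ball' (by linarith [mem_ball.1 hy])).trans hball
    have hyU' : y ∈ U := hyU (mem_ball_self (half_pos hε))
    refine ⟨hyU', by_contra fun hy0 ↦ ?_⟩
    have hxpos := (hw.mono hyU).pos_of_ball hdim (fun z hz ↦ hnonneg z (hyU hz))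
      ((hnonneg y hyU').lt_of_ne' hy0) (mem_ball_comm.1 hy)
    exact hxpos.ne' hx0
  have hcover : U ⊆ (U ∩ w ⁻¹' {0}) ∪ (U ∩ w ⁻¹' Ioi 0) := fun y hy ↦
    (hnonneg y hy).eq_or_lt.imp (fun h ↦ ⟨hy, h.symm⟩) fun h ↦ ⟨hy, h⟩
  refine (isPreconnected_iff_subset_of_disjoint.1 hconn _ _ hzero_open hpos_open hcover ?_).imp
    (fun h y hy ↦ (h hy).2) fun h y hy ↦ (h hy).2
  ext y
  simp +contextual

end SuperharmonicOn

end Superharmonic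

section Kelvin

variable {E : Type*} [NormedAddCommGroup E] [InnerProductSpace ℝ E] {u : E → ℝ} {c x : E}
  {R t : ℝ}

theorem kelvin_of_dist_eq (hR : 0 < R) (hx : dist x c = R) : kelvin c R u x = u x := by
  simp [kelvin, EuclideanGeometry.inversion_of_mem_sphere (mem_sphere.2 hx), hx, hR.ne']

theorem kelvin_pos (hR : 0 < R) (hx : x ≠ c) (hu : 0 < u (inversion c R x)) :
    0 < kelvin c R u x :=
  mul_pos (rpow_pos_of_pos (div_pos hR (dist_pos.2 hx)) _) hu

theorem contDiffAt_kelvin {k : ℕ∞} (hR : R ≠ 0) (hx : x ≠ c)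
    (hu : ContDiffAt ℝ k u (inversion c R x)) : ContDiffAt ℝ k (kelvin c R u) x := by
  have hdist : ContDiffAt ℝ k (fun y ↦ R / dist y c) x :=
    contDiffAt_const.div (contDiffAt_id.dist ℝ contDiffAt_const hx) (dist_ne_zero.2 hx)
  exact (hdist.rpow_const_of_ne (div_ne_zero hR (dist_ne_zero.2 hx))).mul
    (hu.comp x (contDiffAt_const.inversion contDiffAt_const contDiffAt_id hx))

theorem continuousAt_kelvin_uncurry (hR : R ≠ 0) (hx : x ≠ c) (hu : Continuous u) :
    ContinuousAt (fun p : ℝ × E ↦ kelvin c p.1 u p.2) (R, x) := by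
  have hdist : ContinuousAt (fun p : ℝ × E ↦ p.1 / dist p.2 c) (R, x) :=
    continuousAt_fst.div (by fun_prop) (dist_ne_zero.2 hx)
  exact (hdist.rpow_const (.inl (div_ne_zero hR (dist_ne_zero.2 hx)))).mul
    (hu.continuousAt.comp (continuousAt_const.inversion continuousAt_fst continuousAt_snd hx))

theorem kelvin_eq_dist_rpow_mul (hR : 0 ≤ R) (u : E → ℝ) (c x : E) :
    kelvin c R u x = dist x c ^ (2 - finrank ℝ E : ℝ) *
      (R ^ (finrank ℝ E - 2 : ℝ) * u (c + R ^ 2 • (dist x c ^ 2)⁻¹ • (x - c))) := by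
  have hinv : inversion c R x = c + R ^ 2 • (dist x c ^ 2)⁻¹ • (x - c) := by
    rw [smul_smul, ← div_eq_mul_inv, ← div_pow, add_comm]
    rfl
  rw [kelvin, hinv, div_rpow hR dist_nonneg, ← neg_sub (finrank ℝ E : ℝ) 2, rpow_neg dist_nonneg]
  ring

/-- The infinitesimal generator of the dilations `t ↦ t ^ ((n - 2) / 2) * u (c + t • (x - c))`
about `c` which leave the critical equation invariant: their derivative at `t = 1`. -/
noncomputable def dilationDeriv (u : E → ℝ) (c x : E) : ℝ :=
  (finrank ℝ E - 2) / 2 * u x + fderiv ℝ u x (x - c)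

theorem continuous_dilationDeriv (hu : ContDiff ℝ 1 u) (c : E) : Continuous (dilationDeriv u c) :=
  (continuous_const.mul hu.continuous).add
    ((hu.continuous_fderiv one_ne_zero).clm_apply (continuous_id.sub continuous_const))

theorem hasDerivAt_rpow_mul_lineMap (ht : 0 < t)
    (hu : DifferentiableAt ℝ u (AffineMap.lineMap c x t)) :
    HasDerivAt (fun s ↦ s ^ ((finrank ℝ E - 2) / 2 : ℝ) * u (AffineMap.lineMap c x s))
      (t ^ ((finrank ℝ E - 2) / 2 - 1 : ℝ) * dilationDeriv u c (AffineMap.lineMap c x t)) t := by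
  have hpow := hasDerivAt_rpow_const (x := t) (p := (finrank ℝ E - 2) / 2) (.inl ht.ne')
  have hline := hu.hasFDerivAt.comp_hasDerivAt t AffineMap.hasDerivAt_lineMap
  refine (hpow.mul hline).congr_deriv ?_
  have hsub : AffineMap.lineMap c x t - c = t • (x - c) := by simp [AffineMap.lineMap_apply]
  rw [dilationDeriv, hsub, map_smul, rpow_sub_one ht.ne']
  field_simp
  simp only [Function.comp_apply, smul_eq_mul, map_sub]
  ring

theorem kelvin_le_of_dilationDeriv_nonneg (hR : 0 < R) (hx : R ≤ dist x c)
    (hu : Differentiable ℝ u)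
    (hnonneg : ∀ y ∈ segment ℝ (inversion c R x) x, 0 ≤ dilationDeriv u c y) :
    kelvin c R u x ≤ u x := by
  set τ := (R / dist x c) ^ 2
  have hd : 0 < dist x c := hR.trans_le hx
  have hτ : 0 < τ := by positivity
  have hτ1 : τ ≤ 1 := pow_le_one₀ (by positivity) ((div_le_one hd).2 hx)
  have hmem {t : ℝ} (ht : t ∈ Icc τ 1) :
      AffineMap.lineMap c x t ∈ segment ℝ (inversion c R x) x := by
    have := mem_image_of_mem (AffineMap.lineMap c x) (segment_eq_Icc hτ1 ▸ ht : t ∈ segment ℝ τ 1)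
    rwa [image_segment, AffineMap.lineMap_apply_one,
      ← EuclideanGeometry.inversion_eq_lineMap] at this
  set φ : ℝ → ℝ := fun s ↦ s ^ ((finrank ℝ E - 2) / 2 : ℝ) * u (AffineMap.lineMap c x s)
  have hφ (t : ℝ) (ht : t ∈ Icc τ 1) := hasDerivAt_rpow_mul_lineMap (hτ.trans_le ht.1)
    (hu (AffineMap.lineMap c x t))
  have hmono : MonotoneOn φ (Icc τ 1) := monotoneOn_of_hasDerivWithinAt_nonneg (convex_Icc _ _)
    (fun t ht ↦ (hφ t ht).continuousAt.continuousWithinAt)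
    (fun t ht ↦ (hφ t (interior_subset ht)).hasDerivWithinAt)
    fun t ht ↦ mul_nonneg (rpow_nonneg (hτ.le.trans (interior_subset ht).1) _)
      (hnonneg _ (hmem (interior_subset ht)))
  have hφτ : φ τ = kelvin c R u x := by
    simp only [φ, τ, kelvin, EuclideanGeometry.inversion_eq_lineMap]
    rw [← rpow_natCast_mul (by positivity)]
    ring_nf
  have hφ1 : φ 1 = u x := by simp [φ]
  simpa only [hφτ, hφ1] using hmono ⟨le_rfl, hτ1⟩ ⟨hτ1, le_rfl⟩ hτ1

theorem dist_inversion_center_le (hR : 0 ≤ R) (hx : R ≤ dist x c) :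
    dist (inversion c R x) c ≤ R := by
  rw [EuclideanGeometry.dist_inversion_center, sq]
  exact div_le_of_le_mul₀ dist_nonneg hR (by gcongr)

theorem rpow_mul_kelvin_lineMap (hR : 0 < R) (hx : dist x c = R) (ht : 0 < t) :
    t ^ ((finrank ℝ E - 2) / 2 : ℝ) * kelvin c R u (AffineMap.lineMap c x t) =
      t⁻¹ ^ ((finrank ℝ E - 2) / 2 : ℝ) * u (AffineMap.lineMap c x t⁻¹) := by
  have hratio : R / dist (AffineMap.lineMap c x t) c = t⁻¹ := by
    rw [dist_lineMap_left, dist_comm c, hx, norm_of_nonneg ht.le]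
    field_simp
  have hinv : inversion c R (AffineMap.lineMap c x t) = AffineMap.lineMap c x t⁻¹ := by
    rw [EuclideanGeometry.inversion, hratio]
    simp [AffineMap.lineMap_apply, smul_smul, sq, ht.ne']
  have hsq : t⁻¹ ^ (finrank ℝ E - 2 : ℝ) =
      t⁻¹ ^ ((finrank ℝ E - 2) / 2 : ℝ) * t⁻¹ ^ ((finrank ℝ E - 2) / 2 : ℝ) := by
    rw [← rpow_add (inv_pos.2 ht), add_halves]
  have hcancel : t ^ ((finrank ℝ E - 2) / 2 : ℝ) * t⁻¹ ^ ((finrank ℝ E - 2) / 2 : ℝ) = 1 := by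
    rw [← mul_rpow ht.le (inv_nonneg.2 ht.le), mul_inv_cancel₀ ht.ne', one_rpow]
  rw [kelvin, hratio, hinv, hsq]
  linear_combination
    t⁻¹ ^ ((finrank ℝ E - 2) / 2 : ℝ) * u (AffineMap.lineMap c x t⁻¹) * hcancel

theorem nonneg_of_hasDerivAt_of_inv_le {φ : ℝ → ℝ} {φ' : ℝ} (hφ : HasDerivAt φ φ' 1)
    (hle : ∀ᶠ t in 𝓝[>] 1, φ t⁻¹ ≤ φ t) : 0 ≤ φ' := by
  have hinv : HasDerivAt (fun t ↦ φ t⁻¹) (-φ') 1 := by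
    have hφ' : HasDerivAt φ φ' (1 : ℝ)⁻¹ := by simpa using hφ
    simpa [Function.comp_def] using hφ'.comp 1 (hasDerivAt_inv one_ne_zero)
  have hslope := (hasDerivWithinAt_iff_tendsto_slope' (by simp)).1
    ((hφ.sub hinv).hasDerivWithinAt (s := Ioi 1))
  have hnonneg : 0 ≤ φ' - -φ' := by
    refine ge_of_tendsto hslope ?_
    filter_upwards [hle, self_mem_nhdsWithin] with t ht ht1
    simp only [slope_def_field, Pi.sub_apply, inv_one, sub_self, sub_zero]
    exact div_nonneg (sub_nonneg.2 ht) (sub_nonneg.2 (le_of_lt ht1))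
  linarith

theorem dilationDeriv_nonneg_of_kelvin_le {b : ℝ} (hR : 0 < R) (hb : R < b) (hx : dist x c = R)
    (hu : DifferentiableAt ℝ u x) (hle : ∀ y, dist y c ∈ Icc R b → kelvin c R u y ≤ u y) :
    0 ≤ dilationDeriv u c x := by
  have hderiv := hasDerivAt_rpow_mul_lineMap (c := c) (x := x) one_pos (by simpa using hu)
  rw [one_rpow, one_mul, AffineMap.lineMap_apply_one] at hderiv
  refine nonneg_of_hasDerivAt_of_inv_le hderiv ?_
  filter_upwards [Ioo_mem_nhdsGT ((one_lt_div hR).2 hb)] with t ⟨ht1, htb⟩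
  have ht : 0 < t := one_pos.trans ht1
  rw [← rpow_mul_kelvin_lineMap hR hx ht]
  refine mul_le_mul_of_nonneg_left (hle _ ?_) (by positivity)
  rw [dist_lineMap_left, dist_comm c, hx, norm_of_nonneg ht.le]
  exact ⟨le_mul_of_one_le_left hR.le ht1.le, ((lt_div_iff₀ hR).1 htb).le⟩

theorem eventually_kelvin_le_of_dilationDeriv_pos (hu : ContDiff ℝ 1 u) (hR : 0 < R)
    (hx : dist x c = R) (hpos : 0 < dilationDeriv u c x) :
    ∀ᶠ p : ℝ × E in 𝓝 (R, x), p.1 ≤ dist p.2 c → kelvin c p.1 u p.2 ≤ u p.2 := by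
  have hxc : x ≠ c := dist_pos.1 (hx ▸ hR)
  obtain ⟨δ, hδ, hball⟩ := Metric.eventually_nhds_iff_ball.1
    ((continuous_dilationDeriv hu c).continuousAt.eventually (lt_mem_nhds hpos))
  have hinv : ContinuousAt (fun p : ℝ × E ↦ inversion c p.1 p.2) (R, x) :=
    continuousAt_const.inversion continuousAt_fst continuousAt_snd hxc
  have hfix : inversion c R x = x := EuclideanGeometry.inversion_of_mem_sphere (mem_sphere.2 hx)
  filter_upwards [hinv.eventually_mem (by simpa only [hfix] using ball_mem_nhds x hδ),
    continuousAt_snd.eventually_mem (ball_mem_nhds x hδ),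
    continuousAt_fst.eventually_mem (Ioi_mem_nhds hR)] with p hp_inv hp hp_pos hle
  exact kelvin_le_of_dilationDeriv_nonneg hp_pos hle (hu.differentiable one_ne_zero) fun y hy ↦
    (hball y ((convex_ball x δ).segment_subset hp_inv hp hy)).le

variable [FiniteDimensional ℝ E]

theorem eventually_kelvin_le_add (hu : Continuous u) (hdim : 2 < finrank ℝ E) (hR : 0 < R) {ε : ℝ}
    (hε : 0 < ε) :
    ∀ᶠ S in 𝓝 R, ∀ y, R ≤ dist y c →
      kelvin c S u y ≤ kelvin c R u y + ε * dist y c ^ (2 - finrank ℝ E : ℝ) := by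
  have hn : (0 : ℝ) < finrank ℝ E - 2 := sub_pos.2 (mod_cast hdim)
  set G : ℝ × E → ℝ := fun p ↦ p.1 ^ (finrank ℝ E - 2 : ℝ) * u (c + p.1 ^ 2 • p.2)
  have hG : Continuous G := (continuous_fst.rpow_const fun _ ↦ .inr hn.le).mul (by fun_prop)
  have hclose : ∀ᶠ S in 𝓝 R, ∀ e ∈ closedBall (0 : E) R⁻¹, G (S, e) < G (R, e) + ε := by
    refine (isCompact_closedBall _ _).eventually_forall_of_forall_eventually fun e _ ↦ ?_
    exact ContinuousAt.eventually_lt hG.continuousAt (by fun_prop) (lt_add_of_pos_right _ hε)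
  filter_upwards [hclose, lt_mem_nhds hR] with S hS hS0 y hy
  have hd : 0 < dist y c := hR.trans_le hy
  have he : (dist y c ^ 2)⁻¹ • (y - c) ∈ closedBall (0 : E) R⁻¹ := by
    rw [mem_closedBall_zero_iff, norm_smul, ← dist_eq_norm, norm_of_nonneg (by positivity)]
    refine le_trans (le_of_eq ?_) (inv_anti₀ hR hy)
    field_simp
  rw [kelvin_eq_dist_rpow_mul hS0.le, kelvin_eq_dist_rpow_mul hR.le]
  linarith [mul_le_mul_of_nonneg_left (hS _ he).le
    (rpow_nonneg (dist_nonneg (x := y) (y := c)) (2 - finrank ℝ E))]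

end Kelvin

section MovingSpheres

variable {E : Type*} [NormedAddCommGroup E] [InnerProductSpace ℝ E] {u w : E → ℝ} {c x : E} {R : ℝ}

/-- The Kelvin transform of `u` in the sphere of centre `c` and radius `R` stays below `u` outside
that sphere: the inequality propagated in `R` by the method of moving spheres. -/
def DominatesKelvin (u : E → ℝ) (c : E) (R : ℝ) : Prop :=
  ∀ y, R ≤ dist y c → kelvin c R u y ≤ u y

/-- Hopf's lemma: the barrier is the gap between the constant `m` and its Kelvin transform, so the
hypothesis says that `u - m` still dominates its Kelvin transform. -/
theorem dilationDeriv_pos_of_barrier {b m : ℝ} (hdim : 2 < finrank ℝ E) (hR : 0 < R) (hb : R < b)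
    (hx : dist x c = R) (hu : DifferentiableAt ℝ u x) (hm : 0 < m)
    (hbarrier : ∀ y, dist y c ∈ Icc R b →
      m * (1 - (R / dist y c) ^ (finrank ℝ E - 2 : ℝ)) ≤ u y - kelvin c R u y) :
    0 < dilationDeriv u c x := by
  have hn : (0 : ℝ) < finrank ℝ E - 2 := sub_pos.2 (mod_cast hdim)
  have hnonneg : 0 ≤ dilationDeriv (fun y ↦ u y - m) c x :=
    dilationDeriv_nonneg_of_kelvin_le hR hb hx (hu.sub_const m) fun y hy ↦ by
      simp only [kelvin] at hbarrier ⊢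
      linarith [hbarrier y hy]
  rw [dilationDeriv, fderiv_sub_const] at hnonneg
  rw [dilationDeriv]
  linarith [mul_pos hn hm]

theorem DominatesKelvin.of_frequently (hu : Continuous u) (hR : 0 < R)
    (h : ∃ᶠ S in 𝓝 R, DominatesKelvin u c S) : DominatesKelvin u c R := by
  intro y hy
  rcases hy.eq_or_lt with hy | hy
  · exact (kelvin_of_dist_eq hR hy.symm).le
  have hyc : y ≠ c := dist_pos.1 (hR.trans hy)
  have hcont : ContinuousAt (fun S ↦ kelvin c S u y) R :=
    (continuousAt_kelvin_uncurry hR.ne' hyc hu).comp (f := fun S ↦ (S, y)) (by fun_prop)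
  exact le_of_tendsto_of_frequently hcont.tendsto
    ((h.and_eventually (gt_mem_nhds hy)).mono fun S hS ↦ hS.1 y (le_of_lt hS.2))

variable [FiniteDimensional ℝ E]

theorem eventually_kelvin_le_of_annulus (hu : ContDiff ℝ 1 u) (hR : 0 < R) (b : ℝ)
    (hsphere : ∀ y, dist y c = R → 0 < dilationDeriv u c y)
    (hlt : ∀ y, R < dist y c → kelvin c R u y < u y) :
    ∀ᶠ S in 𝓝 R, ∀ y ∈ {y | dist y c ∈ Icc R b}, S ≤ dist y c → kelvin c S u y ≤ u y := by
  have hcompact : IsCompact {y | dist y c ∈ Icc R b} :=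
    (isCompact_closedBall c b).of_isClosed_subset (isClosed_Icc.preimage (by fun_prop))
      fun y hy ↦ hy.2
  refine hcompact.eventually_forall_of_forall_eventually fun y hy ↦ ?_
  rcases hy.1.eq_or_lt with hyR | hyR
  · exact eventually_kelvin_le_of_dilationDeriv_pos hu hR hyR.symm (hsphere y hyR.symm)
  · have hcont := continuousAt_kelvin_uncurry hR.ne' (dist_pos.1 (hR.trans hyR)) hu.continuous
    filter_upwards [hcont.eventually_lt
      (hu.continuous.comp continuous_snd).continuousAt (hlt y hyR)] with p hp _
    exact le_of_lt hp

theorem SuperharmonicOn.exists_barrier (hdim : 2 < finrank ℝ E) (hR : 0 < R)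
    (hw : SuperharmonicOn w (closedBall c R)ᶜ) (hcont : ContinuousOn w (ball c R)ᶜ)
    (hnonneg : ∀ y ∉ ball c R, 0 ≤ w y) (hpos : ∀ y ∉ closedBall c R, 0 < w y) :
    ∃ m > 0, (∀ y, dist y c ∈ Icc R (2 * R) →
        m * (1 - (R / dist y c) ^ (finrank ℝ E - 2 : ℝ)) ≤ w y) ∧
      ∀ y ∉ ball c (2 * R), m * (2 * R / dist y c) ^ (finrank ℝ E - 2 : ℝ) ≤ w y := by
  have : Nontrivial E := nontrivial_of_finrank_pos (by omega : 0 < finrank ℝ E)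
  have h2R : R < 2 * R := by linarith
  have hball : (ball c (2 * R))ᶜ ⊆ (ball c R)ᶜ := compl_subset_compl.2 (ball_subset_ball h2R.le)
  have hsphere {y : E} (hy : dist y c = 2 * R) : y ∉ closedBall c R := by simp [hy, hR]
  obtain ⟨p, hp, hmin⟩ := (isCompact_sphere c (2 * R)).exists_isMinOn
    (NormedSpace.sphere_nonempty.2 (by positivity))
    (hw.continuousOn.mono fun y hy ↦ hsphere hy)
  have hm : 0 < w p := hpos p (hsphere hp)
  refine ⟨w p, hm, fun y hy ↦ ?_, fun y hy ↦ ?_⟩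
  · have hRcancel : R ^ (finrank ℝ E - 2 : ℝ) * R ^ (2 - finrank ℝ E : ℝ) = 1 := by
      rw [← rpow_add hR]
      simp
    have hbarrier := SuperharmonicOn.le_of_annulus
      (α := -(w p * R ^ (finrank ℝ E - 2 : ℝ))) (β := w p) hR
      (hw.mono fun z hz ↦ by simpa using hz.1) (hcont.mono fun z hz ↦ by simpa using hz.1)
      (fun z hz ↦ ?_) (fun z hz ↦ ?_) hy
    · rw [← neg_sub (finrank ℝ E : ℝ) 2, rpow_neg dist_nonneg] at hbarrier
      rw [div_rpow hR.le dist_nonneg]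
      refine le_trans (le_of_eq ?_) hbarrier
      ring
    · have := hnonneg z (by simp [hz])
      linear_combination this - w p * hRcancel
    · have hz' : w p ≤ w z := hmin hz
      have : 0 ≤ w p * R ^ (finrank ℝ E - 2 : ℝ) * (2 * R) ^ (2 - finrank ℝ E : ℝ) := by
        positivity
      linarith
  · exact SuperharmonicOn.mul_rpow_le_of_exterior hdim (by positivity) hm.le
      (hw.mono (compl_subset_compl.2 (closedBall_subset_closedBall h2R.le))) (hcont.mono hball)
      (fun y hy ↦ hnonneg y (hball hy)) hmin hy

theorem SuperharmonicOn.eventually_dominatesKelvin (hdim : 2 < finrank ℝ E)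
    (hu : SuperharmonicOn u univ) (hpos : ∀ y, 0 < u y) (c : E) :
    ∀ᶠ R in 𝓝[>] 0, DominatesKelvin u c R := by
  have hn : (0 : ℝ) < finrank ℝ E - 2 := sub_pos.2 (mod_cast hdim)
  have hC1 : ContDiff ℝ 1 u := contDiff_iff_contDiffAt.2 fun y ↦
    (hu.contDiffAt y (mem_univ y)).of_le one_le_two
  have hcpos : 0 < dilationDeriv u c c := by simpa [dilationDeriv, hpos c] using hn
  obtain ⟨r, hr, hball⟩ := nhds_basis_closedBall.eventually_iff.1
    ((continuous_dilationDeriv hC1 c).continuousAt.eventually (lt_mem_nhds hcpos))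
  have hcompact := isCompact_closedBall c r
  have hne : (closedBall c r).Nonempty := nonempty_closedBall.2 hr.le
  obtain ⟨p, -, hmin⟩ := hcompact.exists_isMinOn hne hC1.continuous.continuousOn
  obtain ⟨q, -, hmax⟩ := hcompact.exists_isMaxOn hne hC1.continuous.continuousOn
  have hsmall : ∀ᶠ R in 𝓝 (0 : ℝ), R ^ (finrank ℝ E - 2 : ℝ) * u q <
      u p * r ^ (finrank ℝ E - 2 : ℝ) := by
    refine ContinuousAt.eventually_lt
      ((continuousAt_id.rpow_const (.inr hn.le)).mul continuousAt_const) continuousAt_const ?_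
    simpa [zero_rpow hn.ne'] using mul_pos (hpos p) (rpow_pos_of_pos hr _)
  filter_upwards [nhdsWithin_le_nhds hsmall, Ioo_mem_nhdsGT hr] with R hR_small ⟨hR, hRr⟩ y hy
  have hinv : inversion c R y ∈ closedBall c r := (dist_inversion_center_le hR.le hy).trans hRr.le
  rcases le_or_gt (dist y c) r with hyr | hyr
  · exact kelvin_le_of_dilationDeriv_nonneg hR hy (hC1.differentiable one_ne_zero) fun z hz ↦
      (hball ((convex_closedBall c r).segment_subset hinv hyr hz)).le
  · calc kelvin c R u y
        ≤ (R / dist y c) ^ (finrank ℝ E - 2 : ℝ) * u q :=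
          mul_le_mul_of_nonneg_left (hmax hinv) (by positivity)
      _ = R ^ (finrank ℝ E - 2 : ℝ) * u q / dist y c ^ (finrank ℝ E - 2 : ℝ) := by
          rw [div_rpow hR.le dist_nonneg]
          ring
      _ ≤ u p * r ^ (finrank ℝ E - 2 : ℝ) / dist y c ^ (finrank ℝ E - 2 : ℝ) := by gcongr
      _ = u p * (r / dist y c) ^ (finrank ℝ E - 2 : ℝ) := by
          rw [div_rpow hr.le dist_nonneg]
          ring
      _ ≤ u y := SuperharmonicOn.mul_rpow_le_of_exterior hdim hr (hpos p).le
          (hu.mono (subset_univ _)) hC1.continuous.continuousOn (fun z _ ↦ (hpos z).le)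
          (fun z hz ↦ hmin (sphere_subset_closedBall hz)) (by simpa using hyr.le)

/-- `u` is a positive entire solution of `-Δ u = n (n - 2) u ^ ((n + 2) / (n - 2))`, the conformally
invariant equation in dimension `n = finrank ℝ E`. -/
structure IsCriticalSolution (u : E → ℝ) : Prop where
  contDiff : ContDiff ℝ 2 u
  pos : ∀ x, 0 < u x
  laplacian_eq : ∀ x, Δ u x =
    -(finrank ℝ E * (finrank ℝ E - 2) * u x ^ ((finrank ℝ E + 2) / (finrank ℝ E - 2) : ℝ))

namespace IsCriticalSolution

theorem superharmonicOn (hu : IsCriticalSolution u) (hdim : 2 < finrank ℝ E) (s : Set E) :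
    SuperharmonicOn u s := by
  have hn : (0 : ℝ) < finrank ℝ E - 2 := sub_pos.2 (mod_cast hdim)
  refine ⟨fun x _ ↦ hu.contDiff.contDiffAt, fun x _ ↦ ?_⟩
  have := hu.pos x
  rw [hu.laplacian_eq, neg_nonpos]
  positivity

theorem laplacian_kelvin (hu : IsCriticalSolution u) (hdim : 2 < finrank ℝ E) (hR : 0 < R)
    (hx : x ≠ c) : Δ (kelvin c R u) x = -(finrank ℝ E * (finrank ℝ E - 2) *
      kelvin c R u x ^ ((finrank ℝ E + 2) / (finrank ℝ E - 2) : ℝ)) := by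
  have hn : (0 : ℝ) < finrank ℝ E - 2 := sub_pos.2 (mod_cast hdim)
  have hratio : 0 < R / dist x c := div_pos hR (dist_pos.2 hx)
  rw [_root_.laplacian_kelvin hR hx hu.contDiff.contDiffAt, hu.laplacian_eq, kelvin,
    mul_rpow (by positivity) (hu.pos _).le, ← rpow_mul hratio.le, mul_div_cancel₀ _ hn.ne']
  ring

theorem superharmonicOn_sub_kelvin (hu : IsCriticalSolution u) (hdim : 2 < finrank ℝ E)
    (hR : 0 < R) (h : DominatesKelvin u c R) :
    SuperharmonicOn (u - kelvin c R u) (closedBall c R)ᶜ := by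
  have hn : (0 : ℝ) < finrank ℝ E - 2 := sub_pos.2 (mod_cast hdim)
  have hxc {x : E} (hx : x ∉ closedBall c R) : x ≠ c := fun hxc ↦ hx (by simp [hxc, hR.le])
  have hkelvin {x : E} (hx : x ∉ closedBall c R) : ContDiffAt ℝ 2 (kelvin c R u) x :=
    contDiffAt_kelvin (k := 2) hR.ne' (hxc hx) hu.contDiff.contDiffAt
  refine ⟨fun x hx ↦ hu.contDiff.contDiffAt.sub (hkelvin hx), fun x (hx : x ∉ closedBall c R) ↦ ?_⟩
  have hpow : kelvin c R u x ^ ((finrank ℝ E + 2) / (finrank ℝ E - 2) : ℝ) ≤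
      u x ^ ((finrank ℝ E + 2) / (finrank ℝ E - 2) : ℝ) :=
    rpow_le_rpow (kelvin_pos hR (hxc hx) (hu.pos _)).le
      (h x (not_le.1 hx).le) (by positivity)
  rw [ContDiffAt.laplacian_sub hu.contDiff.contDiffAt (hkelvin hx),
    hu.laplacian_kelvin hdim hR (hxc hx), hu.laplacian_eq]
  linarith [mul_le_mul_of_nonneg_left hpow
    (by positivity : 0 ≤ finrank ℝ E * (finrank ℝ E - 2 : ℝ))]

theorem eq_kelvin_or_eventually_dominatesKelvin (hu : IsCriticalSolution u)
    (hdim : 2 < finrank ℝ E) (hR : 0 < R) (h : DominatesKelvin u c R) :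
    (∀ y, R < dist y c → kelvin c R u y = u y) ∨ ∀ᶠ S in 𝓝[>] R, DominatesKelvin u c S := by
  have hC1 : ContDiff ℝ 1 u := hu.contDiff.of_le one_le_two
  have hsuper := hu.superharmonicOn_sub_kelvin hdim hR h
  have hnonneg (y : E) (hy : y ∉ ball c R) : 0 ≤ (u - kelvin c R u) y :=
    sub_nonneg.2 (h y (by simpa using hy))
  rcases hsuper.eq_zero_or_pos hdim isClosed_closedBall.isOpen_compl
    (isPreconnected_compl_closedBall (by omega) c hR.le)
    fun y hy ↦ hnonneg y fun hy' ↦ hy (ball_subset_closedBall hy') with hzero | hpos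
  · exact .inl fun y hy ↦ (sub_eq_zero.1 (hzero y (by simpa using hy))).symm
  right
  have hcont : ContinuousOn (u - kelvin c R u) (ball c R)ᶜ := fun y hy ↦
    (hC1.continuous.continuousAt.sub (contDiffAt_kelvin (k := 1) hR.ne'
      (dist_pos.1 (hR.trans_le (not_lt.1 hy))) hC1.contDiffAt).continuousAt).continuousWithinAt
  obtain ⟨m, hm, hinner, houter⟩ := hsuper.exists_barrier hdim hR hcont hnonneg hpos
  have hnear := eventually_kelvin_le_of_annulus hC1 hR (2 * R)
    (fun y hy ↦ dilationDeriv_pos_of_barrier hdim hR (by linarith) hy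
      (hC1.differentiable one_ne_zero y) hm hinner)
    fun y hy ↦ sub_pos.1 (hpos y (by simpa using hy))
  have hfar := eventually_kelvin_le_add (c := c) hu.contDiff.continuous hdim hR
    (mul_pos hm (rpow_pos_of_pos (mul_pos two_pos hR) (finrank ℝ E - 2 : ℝ)))
  filter_upwards [nhdsWithin_le_nhds hnear, nhdsWithin_le_nhds hfar, self_mem_nhdsWithin]
    with S hS_near hS_far hS y hy
  have hRy : R ≤ dist y c := (le_of_lt hS).trans hy
  rcases le_or_gt (dist y c) (2 * R) with hy2 | hy2
  · exact hS_near y ⟨hRy, hy2⟩ hy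
  · have hgap := houter y (by simpa using hy2.le)
    rw [Pi.sub_apply, div_rpow (by positivity) dist_nonneg] at hgap
    have hS := hS_far y hRy
    rw [← neg_sub (finrank ℝ E : ℝ) 2, rpow_neg dist_nonneg, mul_assoc, ← div_eq_mul_inv] at hS
    linarith

theorem dominatesKelvin_or_exists_eq_kelvin (hu : IsCriticalSolution u) (hdim : 2 < finrank ℝ E)
    (c : E) : (∀ R > 0, DominatesKelvin u c R) ∨
      ∃ R > 0, ∀ y, R < dist y c → kelvin c R u y = u y := by
  refine or_iff_not_imp_right.2 fun hne R hR ↦ ?_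
  push Not at hne
  obtain ⟨a, ha, ha0, haR⟩ := (((hu.superharmonicOn hdim univ).eventually_dominatesKelvin hdim
    hu.pos c).and (Ioo_mem_nhdsGT hR)).exists
  have hclosed : IsClosed ({S | DominatesKelvin u c S} ∩ Icc a R) := by
    refine isClosed_iff_frequently.2 fun S hS ↦ ?_
    have hSI : S ∈ Icc a R := isClosed_iff_frequently.1 isClosed_Icc S (hS.mono fun _ ↦ And.right)
    exact ⟨.of_frequently hu.contDiff.continuous (ha0.trans_le hSI.1)
      (hS.mono fun _ ↦ And.left), hSI⟩
  refine hclosed.Icc_subset_of_forall_mem_nhdsWithin ha (fun S hS ↦ ?_) (right_mem_Icc.2 haR.le)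
  obtain ⟨y, hy, hy_ne⟩ := hne S (ha0.trans_le hS.2.1)
  exact (hu.eq_kelvin_or_eventually_dominatesKelvin hdim (ha0.trans_le hS.2.1) hS.1).resolve_left
    fun heq ↦ hy_ne (heq y hy)

end IsCriticalSolution

end MovingSpheres

section Infinity

variable {E : Type*} [NormedAddCommGroup E] [InnerProductSpace ℝ E] {u : E → ℝ} {c e : E} {R : ℝ}

/-- The Kelvin transform of `kelvin c R u` in the unit sphere, written so that it extends smoothly
to `0`: its germ at `0` is the expansion of `kelvin c R u` at infinity. -/
noncomputable def kelvinAtInfinity (c : E) (R : ℝ) (u : E → ℝ) (e : E) : ℝ :=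
  R ^ (finrank ℝ E - 2 : ℝ) *
    (1 - 2 * ⟪c, e⟫_ℝ + ‖c‖ ^ 2 * ‖e‖ ^ 2) ^ ((2 - finrank ℝ E) / 2 : ℝ) *
    u (c + (R ^ 2 * (1 - 2 * ⟪c, e⟫_ℝ + ‖c‖ ^ 2 * ‖e‖ ^ 2)⁻¹) • (e - ‖e‖ ^ 2 • c))

theorem kelvinAtInfinity_zero (c : E) (R : ℝ) (u : E → ℝ) :
    kelvinAtInfinity c R u 0 = R ^ (finrank ℝ E - 2 : ℝ) * u c := by
  simp [kelvinAtInfinity]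

theorem kelvin_zero_one (u : E → ℝ) (e : E) :
    kelvin 0 1 u e = ‖e‖ ^ (2 - finrank ℝ E : ℝ) * u ((‖e‖ ^ 2)⁻¹ • e) := by
  simp [kelvin_eq_dist_rpow_mul zero_le_one]

theorem kelvin_kelvin_eq_kelvinAtInfinity (hR : 0 ≤ R) (he : e ≠ 0) :
    kelvin 0 1 (kelvin c R u) e = kelvinAtInfinity c R u e := by
  set q := 1 - 2 * ⟪c, e⟫_ℝ + ‖c‖ ^ 2 * ‖e‖ ^ 2 with hq
  have he' : 0 < ‖e‖ := norm_pos_iff.2 he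
  have hdist : ‖e‖ ^ 2 * dist ((‖e‖ ^ 2)⁻¹ • e) c ^ 2 = q := by
    rw [dist_eq_norm, norm_sub_sq_real, norm_smul, real_inner_smul_left, real_inner_comm,
      norm_of_nonneg (by positivity), hq]
    field_simp
  have hq0 : 0 ≤ q := hdist ▸ by positivity
  have hsqrt : ‖e‖ * dist ((‖e‖ ^ 2)⁻¹ • e) c = q ^ (2⁻¹ : ℝ) := by
    rw [← hdist, ← mul_pow, ← rpow_natCast_mul (by positivity)]
    norm_num
  have hpoint : R ^ 2 • (dist ((‖e‖ ^ 2)⁻¹ • e) c ^ 2)⁻¹ • ((‖e‖ ^ 2)⁻¹ • e - c) =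
      (R ^ 2 * q⁻¹) • (e - ‖e‖ ^ 2 • c) := by
    rw [← hdist, mul_inv, smul_smul, smul_sub, smul_sub]
    simp only [smul_smul]
    congr 2
    all_goals field_simp
  rw [kelvin_zero_one, kelvin_eq_dist_rpow_mul hR, hpoint, kelvinAtInfinity, ← hq, ← mul_assoc,
    ← mul_rpow he'.le dist_nonneg, hsqrt, ← rpow_mul hq0]
  ring_nf

theorem hasFDerivAt_kelvinAtInfinity_zero (hu : DifferentiableAt ℝ u c) (R : ℝ) :
    HasFDerivAt (kelvinAtInfinity c R u) (R ^ (finrank ℝ E - 2 : ℝ) •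
      (((finrank ℝ E - 2) * u c) • innerSL ℝ c + R ^ 2 • fderiv ℝ u c)) 0 := by
  set q : E → ℝ := fun e ↦ 1 - 2 * ⟪c, e⟫_ℝ + ‖c‖ ^ 2 * ‖e‖ ^ 2
  have hq0 : q 0 = 1 := by simp [q]
  have hnorm : HasFDerivAt (fun e : E ↦ ‖e‖ ^ 2) (0 : E →L[ℝ] ℝ) 0 := by
    simpa using (hasFDerivAt_id (0 : E)).norm_sq
  have hq : HasFDerivAt q (-(2 : ℝ) • innerSL ℝ c) 0 := by
    have hadd := (((innerSL ℝ c).hasFDerivAt (x := 0)).const_mul 2).const_sub 1 |>.add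
      (hnorm.const_mul (‖c‖ ^ 2))
    exact hadd.congr_fderiv (by simp)
  have hpoint : HasFDerivAt (fun e ↦ c + (R ^ 2 * (q e)⁻¹) • (e - ‖e‖ ^ 2 • c))
      (R ^ 2 • ContinuousLinearMap.id ℝ E) 0 := by
    have hscal : HasFDerivAt (fun e ↦ R ^ 2 * (q e)⁻¹) _ 0 :=
      ((hasFDerivAt_inv (by simp [hq0] : q 0 ≠ 0)).comp 0 hq).const_mul (R ^ 2)
    have := (hscal.smul ((hasFDerivAt_id (0 : E)).sub (hnorm.smul_const c))).const_add c
    simpa [hq0] using this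
  have hu' : HasFDerivAt u (fderiv ℝ u c)
      (c + (R ^ 2 * (q 0)⁻¹) • ((0 : E) - ‖(0 : E)‖ ^ 2 • c)) := by
    simpa using hu.hasFDerivAt
  have hpow := (hq.rpow_const (p := (2 - finrank ℝ E) / 2) (.inl (by simp [hq0]))).const_mul
    (R ^ (finrank ℝ E - 2 : ℝ))
  refine (hpow.mul (hu'.comp 0 hpoint)).congr_fderiv (ContinuousLinearMap.ext fun v ↦ ?_)
  simp only [hq0, one_rpow, inv_one, mul_one, norm_zero, ne_eq, OfNat.ofNat_ne_zero,
    not_false_eq_true, zero_pow, zero_smul, sub_self, smul_zero, add_zero, neg_smul, smul_neg,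
    smul_add, add_apply, smul_apply, neg_apply, smul_eq_mul, coe_innerSL_apply, ringHom_apply,
    ContinuousLinearMap.comp_smulₛₗ, ContinuousLinearMap.comp_id, Function.comp_apply]
  ring

theorem eventually_lt_dist_inversion (c : E) (R : ℝ) :
    ∀ᶠ e in 𝓝[≠] (0 : E), R < dist (inversion 0 1 e) c := by
  have hlim : Tendsto (fun e : E ↦ ‖e‖⁻¹) (𝓝[≠] 0) atTop :=
    tendsto_inv_nhdsGT_zero.comp tendsto_norm_nhdsNE_zero
  filter_upwards [hlim.eventually_gt_atTop (R + dist c 0)] with e he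
  have hinv : dist (inversion 0 1 e) 0 = ‖e‖⁻¹ := by
    rw [EuclideanGeometry.dist_inversion_center, dist_zero_right, one_pow, one_div]
  linarith [dist_triangle (inversion 0 1 e) c 0]

theorem kelvin_eventuallyEq_kelvinAtInfinity (hR : 0 ≤ R)
    (h : ∀ y, R < dist y c → kelvin c R u y = u y) :
    kelvin 0 1 u =ᶠ[𝓝[≠] 0] kelvinAtInfinity c R u := by
  filter_upwards [eventually_lt_dist_inversion c R, self_mem_nhdsWithin] with e he he0
  rw [← kelvin_kelvin_eq_kelvinAtInfinity hR he0]
  simp only [kelvin.eq_def (0 : E) 1, h _ he]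

theorem DominatesKelvin.eventually_kelvinAtInfinity_le (h : DominatesKelvin u c R) (hR : 0 ≤ R) :
    ∀ᶠ e in 𝓝[≠] 0, kelvinAtInfinity c R u e ≤ kelvin 0 1 u e := by
  filter_upwards [eventually_lt_dist_inversion c R, self_mem_nhdsWithin] with e he he0
  rw [← kelvin_kelvin_eq_kelvinAtInfinity hR he0]
  exact mul_le_mul_of_nonneg_left (h _ (le_of_lt he)) (by positivity)

theorem tendsto_kelvinAtInfinity (hu : DifferentiableAt ℝ u c) (R : ℝ) :
    Tendsto (kelvinAtInfinity c R u) (𝓝[≠] 0) (𝓝 (R ^ (finrank ℝ E - 2 : ℝ) * u c)) :=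
  kelvinAtInfinity_zero c R u ▸
    (hasFDerivAt_kelvinAtInfinity_zero hu R).continuousAt.tendsto.mono_left nhdsWithin_le_nhds

theorem kelvinAtInfinity_eventuallyEq [Nontrivial E] {c' : E} {R' : ℝ}
    (hu : DifferentiableAt ℝ u c) (hR : 0 ≤ R) (h : ∀ y, R < dist y c → kelvin c R u y = u y)
    (hu' : DifferentiableAt ℝ u c') (hR' : 0 ≤ R')
    (h' : ∀ y, R' < dist y c' → kelvin c' R' u y = u y) :
    kelvinAtInfinity c R u =ᶠ[𝓝 0] kelvinAtInfinity c' R' u := by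
  have heq : kelvinAtInfinity c R u =ᶠ[𝓝[≠] 0] kelvinAtInfinity c' R' u :=
    (kelvin_eventuallyEq_kelvinAtInfinity hR h).symm.trans
      (kelvin_eventuallyEq_kelvinAtInfinity hR' h')
  exact ((hasFDerivAt_kelvinAtInfinity_zero hu R).continuousAt
    |>.eventuallyEq_nhds_iff_eventuallyEq_nhdsNE
      (hasFDerivAt_kelvinAtInfinity_zero hu' R').continuousAt).1 heq

/-- The equality about `c` forces `u y` to decay like `R ^ (n - 2) * u c * ‖y‖ ^ (2 - n)`, which is
contradicted by letting `S` tend to infinity. -/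
theorem not_forall_dominatesKelvin (hu : Differentiable ℝ u) (hpos : ∀ x, 0 < u x)
    (hdim : 2 < finrank ℝ E) (hR : 0 ≤ R) (h : ∀ y, R < dist y c → kelvin c R u y = u y) (c' : E) :
    ¬ ∀ S > 0, DominatesKelvin u c' S := by
  intro hdom
  have : Nontrivial E := nontrivial_of_finrank_pos (by omega : 0 < finrank ℝ E)
  have hn : (0 : ℝ) < finrank ℝ E - 2 := sub_pos.2 (mod_cast hdim)
  have hlim : Tendsto (kelvin 0 1 u) (𝓝[≠] 0) (𝓝 (R ^ (finrank ℝ E - 2 : ℝ) * u c)) :=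
    (tendsto_kelvinAtInfinity (hu c) R).congr' (kelvin_eventuallyEq_kelvinAtInfinity hR h).symm
  have hbdd (S : ℝ) (hS : 0 < S) :
      S ^ (finrank ℝ E - 2 : ℝ) * u c' ≤ R ^ (finrank ℝ E - 2 : ℝ) * u c :=
    le_of_tendsto_of_tendsto (tendsto_kelvinAtInfinity (hu c') S) hlim
      ((hdom S hS).eventually_kelvinAtInfinity_le hS.le)
  obtain ⟨S, hS, hS0⟩ := ((((tendsto_rpow_atTop hn).atTop_mul_const (hpos c')).eventually_gt_atTop
    (R ^ (finrank ℝ E - 2 : ℝ) * u c)).and (eventually_gt_atTop 0)).exists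
  exact (hbdd S hS0).not_gt hS

theorem le_of_forall_dominatesKelvin (h : ∀ c, ∀ R > 0, DominatesKelvin u c R) (x y : E) :
    u x ≤ u y := by
  rcases eq_or_ne x y with rfl | hxy
  · rfl
  have hle {τ : ℝ} (hτ0 : 0 < τ) (hτ1 : τ < 1) :
      τ ^ ((finrank ℝ E - 2) / 2 : ℝ) * u x ≤ u y := by
    -- The centre recedes to infinity along the line from `y` through `x` as `τ → 1`.
    set c := AffineMap.lineMap y x (1 - τ)⁻¹
    have hτ : 1 - τ ≠ 0 := (sub_pos.2 hτ1).ne'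
    have hyc : 0 < dist y c := by
      simpa [c, hxy.symm] using hτ
    have hratio : √τ * dist y c / dist y c = √τ := mul_div_cancel_right₀ _ hyc.ne'
    have hx : inversion c (√τ * dist y c) y = x := by
      rw [EuclideanGeometry.inversion_eq_lineMap, hratio, sq_sqrt hτ0.le]
      simp only [c, AffineMap.lineMap_apply, vsub_eq_sub, vadd_eq_add]
      match_scalars <;> field_simp <;> ring
    have := h c (√τ * dist y c) (by positivity) y
      (mul_le_of_le_one_left hyc.le (sqrt_le_one.2 hτ1.le))
    rwa [kelvin, hx, hratio, sqrt_eq_rpow, ← rpow_mul hτ0.le, one_div_mul_eq_div] at this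
  have hlim : Tendsto (fun τ : ℝ ↦ τ ^ ((finrank ℝ E - 2) / 2 : ℝ) * u x) (𝓝[<] 1) (𝓝 (u x)) := by
    have hcont : ContinuousAt (fun τ : ℝ ↦ τ ^ ((finrank ℝ E - 2) / 2 : ℝ) * u x) 1 :=
      (continuousAt_id.rpow_const (.inl one_ne_zero)).mul continuousAt_const
    simpa using hcont.tendsto.mono_left nhdsWithin_le_nhds
  refine le_of_tendsto hlim ?_
  filter_upwards [Ioo_mem_nhdsLT one_pos] with τ hτ
  exact hle hτ.1 hτ.2

end Infinity

section Classification

variable {E : Type*} [NormedAddCommGroup E] [InnerProductSpace ℝ E] [FiniteDimensional ℝ E]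
  {u : E → ℝ} {c : E}

theorem laplacian_of_eventually_hasGradientAt_smul_sub {f φ : E → ℝ} (hφ : DifferentiableAt ℝ φ c)
    (hf : ∀ᶠ y in 𝓝 c, HasGradientAt f (φ y • (y - c)) y) : Δ f c = finrank ℝ E * φ c := by
  have hT : HasFDerivAt (fun y ↦ φ y • (y - c)) (φ c • ContinuousLinearMap.id ℝ E) c :=
    (hφ.hasFDerivAt.smul ((hasFDerivAt_id c).sub_const c)).congr_fderiv (by simp)
  rw [laplacian_eq_trace_of_eventually_hasGradientAt hf hT]
  simp [mul_comm]

theorem eq_add_norm_sq_of_hasGradientAt {g : E → ℝ} {b : ℝ}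
    (hg : ∀ y, HasGradientAt g ((2 * b) • (y - c)) y) (y : E) :
    g y = g c + b * ‖y - c‖ ^ 2 := by
  have hderiv (z : E) : HasFDerivAt (fun z ↦ g z - b * ‖z - c‖ ^ 2) (0 : E →L[ℝ] ℝ) z := by
    refine ((hg z).hasFDerivAt.sub
      ((((hasFDerivAt_id z).sub_const c).norm_sq).const_mul b)).congr_fderiv
      (ContinuousLinearMap.ext fun v ↦ ?_)
    simp only [map_smul, map_sub, id_eq, ContinuousLinearMap.comp_id, sub_apply, smul_apply,
      zero_apply, toDual_apply_apply, coe_innerSL_apply, smul_eq_mul, nsmul_eq_mul, Nat.cast_ofNat]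
    ring
  have hconst := is_const_of_fderiv_eq_zero (fun z ↦ (hderiv z).differentiableAt)
    (fun z ↦ (hderiv z).fderiv) y c
  simp only [sub_self, norm_zero] at hconst
  linarith

theorem hasGradientAt_rpow_neg_two_div {d b : ℝ} {x₀ y : E} (hd : d ≠ 2) (huy : 0 < u y)
    (hgrad : HasGradientAt u (-((d - 2) * b * u y ^ (d / (d - 2))) • (y - x₀)) y) :
    HasGradientAt (fun z ↦ u z ^ (-(2 / (d - 2)))) ((2 * b) • (y - x₀)) y := by
  have hd : d - 2 ≠ 0 := sub_ne_zero.2 hd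
  have hpow : u y ^ (-(2 / (d - 2)) - 1) * u y ^ (d / (d - 2)) = 1 := by
    have hexp : -(2 / (d - 2)) - 1 + d / (d - 2) = 0 := by
      field_simp
      ring
    rw [← rpow_add huy, hexp, rpow_zero]
  have hcoeff : 2 / (d - 2) * (d - 2) = 2 := div_mul_cancel₀ 2 hd
  refine (hgrad.hasFDerivAt.rpow_const (.inl huy.ne')).congr_fderiv
    (ContinuousLinearMap.ext fun v ↦ ?_)
  simp only [map_smul, smul_apply, toDual_apply_apply, smul_eq_mul]
  calc _ = 2 / (d - 2) * (d - 2) * b * ⟪y - x₀, v⟫_ℝ *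
        (u y ^ (-(2 / (d - 2)) - 1) * u y ^ (d / (d - 2))) := by ring
    _ = _ := by rw [hcoeff, hpow, mul_one]

namespace IsCriticalSolution

theorem exists_eq_kelvin (hu : IsCriticalSolution u) (hdim : 2 < finrank ℝ E) (c : E) :
    ∃ R > 0, ∀ y, R < dist y c → kelvin c R u y = u y := by
  refine (hu.dominatesKelvin_or_exists_eq_kelvin hdim c).resolve_left fun hc ↦ ?_
  have hdom (c' : E) : ∀ R > 0, DominatesKelvin u c' R :=
    (hu.dominatesKelvin_or_exists_eq_kelvin hdim c').resolve_right fun ⟨R, hR, heq⟩ ↦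
      not_forall_dominatesKelvin (hu.contDiff.differentiable two_ne_zero) hu.pos hdim hR.le heq c hc
  have hconst : u = fun _ ↦ u c := funext fun x ↦ le_antisymm
    (le_of_forall_dominatesKelvin hdom x c) (le_of_forall_dominatesKelvin hdom c x)
  have hn : (0 : ℝ) < finrank ℝ E - 2 := sub_pos.2 (mod_cast hdim)
  have hn' : (0 : ℝ) < finrank ℝ E := by linarith
  have hlap := hu.laplacian_eq c
  have hzero : Δ u c = 0 := by
    rw [hconst]
    simp [laplacian_const]
  have := mul_pos (mul_pos hn' hn)
    (rpow_pos_of_pos (hu.pos c) ((finrank ℝ E + 2) / (finrank ℝ E - 2) : ℝ))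
  linarith

/-- `L` and `ℓ` are the value and the derivative at `0` of the extension of `kelvin 0 1 u`, computed
from every centre `y`. -/
theorem exists_expansion_atInfinity (hu : IsCriticalSolution u) (hdim : 2 < finrank ℝ E) :
    ∃ L > 0, ∃ ℓ : E →L[ℝ] ℝ, ∀ y, ∃ R > 0, R ^ (finrank ℝ E - 2 : ℝ) * u y = L ∧
      R ^ (finrank ℝ E - 2 : ℝ) •
        (((finrank ℝ E - 2) * u y) • innerSL ℝ y + R ^ 2 • fderiv ℝ u y) = ℓ := by
  have : Nontrivial E := nontrivial_of_finrank_pos (by omega : 0 < finrank ℝ E)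
  have hdiff := hu.contDiff.differentiable two_ne_zero
  choose R hR heq using hu.exists_eq_kelvin hdim
  have hgerm (y : E) : kelvinAtInfinity y (R y) u =ᶠ[𝓝 0] kelvinAtInfinity 0 (R 0) u :=
    kelvinAtInfinity_eventuallyEq (hdiff y) (hR y).le (heq y) (hdiff 0) (hR 0).le (heq 0)
  have hL : 0 < kelvinAtInfinity 0 (R 0) u 0 := by
    rw [kelvinAtInfinity_zero]
    exact mul_pos (rpow_pos_of_pos (hR 0) _) (hu.pos 0)
  refine ⟨_, hL, fderiv ℝ (kelvinAtInfinity 0 (R 0) u) 0, fun y ↦ ⟨R y, hR y, ?_, ?_⟩⟩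
  · rw [← kelvinAtInfinity_zero, (hgerm y).eq_of_nhds]
  · rw [← (hgerm y).fderiv_eq, (hasFDerivAt_kelvinAtInfinity_zero (hdiff y) _).fderiv]

/-- Eliminating the radius from the value and the derivative of the expansion at infinity leaves a
first-order equation for `u`. -/
theorem exists_hasGradientAt (hu : IsCriticalSolution u) (hdim : 2 < finrank ℝ E) :
    ∃ x₀ : E, ∃ b > 0, ∀ y, HasGradientAt u
      (-((finrank ℝ E - 2) * b * u y ^ (finrank ℝ E / (finrank ℝ E - 2) : ℝ)) • (y - x₀)) y := by
  have hn : (0 : ℝ) < finrank ℝ E - 2 := sub_pos.2 (mod_cast hdim)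
  obtain ⟨L, hL, ℓ, hexpansion⟩ := hu.exists_expansion_atInfinity hdim
  refine ⟨((finrank ℝ E - 2) * L)⁻¹ • (toDual ℝ E).symm ℓ,
    L ^ (-(2 / (finrank ℝ E - 2)) : ℝ), by positivity, fun y ↦ ?_⟩
  obtain ⟨R, hR, hval, hderiv⟩ := hexpansion y
  have huy := hu.pos y
  have hR_sq : R ^ 2 * (L ^ (-(2 / (finrank ℝ E - 2)) : ℝ) *
      u y ^ (2 / (finrank ℝ E - 2) : ℝ)) = 1 := by
    rw [← hval, mul_rpow (rpow_nonneg hR.le _) huy.le, ← rpow_mul hR.le, mul_assoc,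
      ← rpow_add huy, mul_neg, mul_div_cancel₀ _ hn.ne', rpow_neg hR.le, neg_add_cancel]
    simp [hR.ne']
  have hexp : (finrank ℝ E / (finrank ℝ E - 2) : ℝ) = 2 / (finrank ℝ E - 2) + 1 := by
    field_simp
    ring
  have hinner (v : E) : ⟪y - ((finrank ℝ E - 2) * L)⁻¹ • (toDual ℝ E).symm ℓ, v⟫_ℝ =
      -(((finrank ℝ E - 2) * u y)⁻¹ * R ^ 2 * fderiv ℝ u y v) := by
    have := rpow_pos_of_pos hR (finrank ℝ E - 2 : ℝ)
    rw [inner_sub_left, real_inner_smul_left, toDual_symm_apply, ← hderiv, ← hval]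
    simp only [smul_apply, add_apply, innerSL_apply_apply, smul_eq_mul]
    field_simp
    ring
  refine (hu.contDiff.differentiable two_ne_zero y).hasFDerivAt.congr_fderiv
    (ContinuousLinearMap.ext fun v ↦ ?_)
  rw [toDual_apply_apply, real_inner_smul_left, hinner, hexp, rpow_add_one huy.ne']
  field_simp
  linear_combination -(fderiv ℝ u y v) * hR_sq

theorem rpow_eq_of_hasGradientAt (hu : IsCriticalSolution u) (hdim : 2 < finrank ℝ E) {b : ℝ}
    (hgrad : ∀ y, HasGradientAt u
      (-((finrank ℝ E - 2) * b * u y ^ (finrank ℝ E / (finrank ℝ E - 2) : ℝ)) • (y - c)) y) :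
    u c ^ (2 / (finrank ℝ E - 2) : ℝ) = b := by
  have hn : (0 : ℝ) < finrank ℝ E - 2 := sub_pos.2 (mod_cast hdim)
  have hn' : (0 : ℝ) < finrank ℝ E := by linarith
  have huc := hu.pos c
  have hlap : -(finrank ℝ E * (finrank ℝ E - 2) *
      u c ^ ((finrank ℝ E + 2) / (finrank ℝ E - 2) : ℝ)) = finrank ℝ E *
        -((finrank ℝ E - 2) * b * u c ^ (finrank ℝ E / (finrank ℝ E - 2) : ℝ)) :=
    hu.laplacian_eq c ▸ laplacian_of_eventually_hasGradientAt_smul_sub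
      (((hu.contDiff.differentiable two_ne_zero c).rpow_const (.inl huc.ne')).const_mul _).neg
      (.of_forall hgrad)
  have hexp : ((finrank ℝ E + 2) / (finrank ℝ E - 2) : ℝ) =
      2 / (finrank ℝ E - 2) + finrank ℝ E / (finrank ℝ E - 2) := by
    ring
  have hpow := rpow_pos_of_pos huc (finrank ℝ E / (finrank ℝ E - 2) : ℝ)
  rw [hexp, rpow_add huc] at hlap
  refine mul_left_cancel₀ (mul_pos (mul_pos hn' hn) hpow).ne' ?_
  linear_combination -hlap

theorem exists_eq_bubble (hu : IsCriticalSolution u) (hdim : 2 < finrank ℝ E) :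
    ∃ x₀ : E, ∃ r > 0, ∀ x,
      u x = (r / (r ^ 2 + ‖x - x₀‖ ^ 2)) ^ ((finrank ℝ E - 2) / 2 : ℝ) := by
  have hn : (0 : ℝ) < finrank ℝ E - 2 := sub_pos.2 (mod_cast hdim)
  obtain ⟨x₀, b, hb, hgrad⟩ := hu.exists_hasGradientAt hdim
  refine ⟨x₀, b⁻¹, inv_pos.2 hb, fun x ↦ ?_⟩
  have hux := hu.pos x
  have hquad : u x ^ (-(2 / (finrank ℝ E - 2)) : ℝ) = b⁻¹ + b * ‖x - x₀‖ ^ 2 := by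
    rw [eq_add_norm_sq_of_hasGradientAt
      (fun y ↦ hasGradientAt_rpow_neg_two_div (sub_ne_zero.1 hn.ne') (hu.pos y) (hgrad y)) x,
      rpow_neg (hu.pos x₀).le, hu.rpow_eq_of_hasGradientAt hdim hgrad]
  have hbase : b⁻¹ / (b⁻¹ ^ 2 + ‖x - x₀‖ ^ 2) = u x ^ (2 / (finrank ℝ E - 2) : ℝ) := by
    rw [← inv_inj, ← rpow_neg hux.le, hquad]
    field_simp
  rw [hbase, ← rpow_mul hux.le, div_mul_div_cancel₀ hn.ne', div_self two_ne_zero, rpow_one]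

end IsCriticalSolution

end Classification

theorem bubble_eq_of_normalized {E : Type*} [NormedAddCommGroup E] {u : E → ℝ} {x₀ : E} {r k : ℝ}
    (hr : 0 < r) (hk : 0 < k) (hu : ∀ x, u x = (r / (r ^ 2 + ‖x - x₀‖ ^ 2)) ^ k)
    (hu0 : u 0 = 1) (hle : u x₀ ≤ 1) (y : E) : u y = (1 + ‖y‖ ^ 2) ^ (-k) := by
  have hr_eq : r = r ^ 2 + ‖x₀‖ ^ 2 := by
    rw [hu, zero_sub, norm_neg, ← one_rpow k,
      rpow_left_inj (by positivity) zero_le_one hk.ne'] at hu0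
    exact (div_eq_one_iff_eq (by positivity)).1 hu0
  have hr_ge : 1 ≤ r := by
    rw [hu, ← one_rpow k, rpow_le_rpow_iff (by positivity) zero_le_one hk] at hle
    simpa [sq, hr.ne', div_le_one hr, inv_le_one₀ hr] using hle
  have hx₀ : x₀ = 0 := by
    rw [← norm_eq_zero, ← sq_eq_zero_iff]
    nlinarith [sq_nonneg ‖x₀‖]
  have hr_one : r = 1 := by
    rw [hx₀, norm_zero] at hr_eq
    nlinarith
  rw [hu, hr_one, hx₀, sub_zero, one_pow, one_div, inv_rpow (by positivity),
    rpow_neg (by positivity)]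

theorem stmt_19_general {E : Type*} [NormedAddCommGroup E] [InnerProductSpace ℝ E]
    [FiniteDimensional ℝ E] {u : E → ℝ} (hdim : 2 < finrank ℝ E) (hu : IsCriticalSolution u)
    (hu0 : u 0 = 1) (hle : ∀ y, u y ≤ 1) (y : E) :
    u y = (1 + ‖y‖ ^ 2) ^ (-((finrank ℝ E - 2) / 2) : ℝ) := by
  obtain ⟨x₀, r, hr, hbubble⟩ := hu.exists_eq_bubble hdim
  exact bubble_eq_of_normalized hr (half_pos (sub_pos.2 (mod_cast hdim))) hbubble hu0 (hle x₀) y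

/-- Caffarelli–Gidas–Spruck classification in dimension 5, normalized so that
the maximum value `1` is attained at the origin. -/
theorem stmt_19
    (u : EuclideanSpace ℝ (Fin 5) → ℝ)
    (hC2 : ContDiff ℝ 2 u)
    (hpos : ∀ y, 0 < u y)
    (hpde : ∀ y, (∑ i : Fin 5,
        iteratedFDeriv ℝ 2 u y
          ![EuclideanSpace.single i (1 : ℝ), EuclideanSpace.single i (1 : ℝ)])
        = -(15 * u y ^ ((7 : ℝ) / 3)))
    (hu0 : u 0 = 1)
    (hle : ∀ y, u y ≤ 1) :
    ∀ y, u y = (1 + ‖y‖ ^ 2) ^ (-(3 : ℝ) / 2) := by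
  have hcrit : IsCriticalSolution u := by
    refine ⟨hC2, hpos, fun y ↦ ?_⟩
    have hlap := hpde y
    simp only [laplacian_eq_iteratedFDeriv_orthonormalBasis u (EuclideanSpace.basisFun (Fin 5) ℝ),
      EuclideanSpace.basisFun_apply, finrank_euclideanSpace_fin]
    norm_num [hlap]
  intro y
  convert stmt_19_general (by simp) hcrit hu0 hle y using 2
  norm_num [finrank_euclideanSpace_fin]
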